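/- Let Ω, Ω' ⊆ ℝ³ be open, let f = (F, f₃) : Ω' → ℝ³ be a smooth map satisfying the contact equations with J_F > 0 on Ω', and let g = (G, g₃) : Ω → Ω' be a smooth conformal map. Then the right cocycle condition S_CR(f ∘ g) = (S_CR(f) ∘ g) · (ZG)² holds on Ω. -/

import Mathlib

noncomputable section

open Complex

/-- The underlying space of the first Heisenberg group: ℝ³ with coordinates (x, y, t). -/
abbrev Heis : Type := ℝ × ℝ × ℝ

/-- The left-invariant vector field X = ∂/∂x + 2y ∂/∂t, as a derivation. -/
def XD {E : Type*} [NormedAddCommGroup E] [NormedSpace ℝ E] (u : Heis → E) (p : Heis) : E :=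
  fderiv ℝ u p (1, 0, 2 * p.2.1)

/-- The left-invariant vector field Y = ∂/∂y − 2x ∂/∂t, as a derivation. -/
def YD {E : Type*} [NormedAddCommGroup E] [NormedSpace ℝ E] (u : Heis → E) (p : Heis) : E :=
  fderiv ℝ u p (0, 1, -(2 * p.1))

/-- The vector field T = ∂/∂t, as a derivation. -/
def TD {E : Type*} [NormedAddCommGroup E] [NormedSpace ℝ E] (u : Heis → E) (p : Heis) : E :=
  fderiv ℝ u p (0, 0, 1)

/-- Z = (X − iY)/2. -/
def ZD (u : Heis → ℂ) (p : Heis) : ℂ := (XD u p - Complex.I * YD u p) / 2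

/-- Z̄ = (X + iY)/2. -/
def ZbD (u : Heis → ℂ) (p : Heis) : ℂ := (XD u p + Complex.I * YD u p) / 2

/-- The complexification F = f₁ + i f₂ of the horizontal components. -/
def CF (f1 f2 : Heis → ℝ) : Heis → ℂ := fun p => (f1 p : ℂ) + (f2 p : ℂ) * Complex.I

/-- Complexification of a real-valued function. -/
def Cplx (u : Heis → ℝ) : Heis → ℂ := fun p => (u p : ℂ)

/-- The horizontal Jacobian J_F = Xf₁·Yf₂ − Yf₁·Xf₂. -/
def JF (f1 f2 : Heis → ℝ) (p : Heis) : ℝ := XD f1 p * YD f2 p - YD f1 p * XD f2 p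

/-- The contact equations on Ω. -/
def ContactOn (f1 f2 f3 : Heis → ℝ) (Ω : Set Heis) : Prop :=
  ∀ p ∈ Ω, XD f3 p - 2 * f2 p * XD f1 p + 2 * f1 p * XD f2 p = 0 ∧
           YD f3 p - 2 * f2 p * YD f1 p + 2 * f1 p * YD f2 p = 0

/-- f = (f₁,f₂,f₃) is conformal on Ω: smooth, contact, J_F > 0, and the conformality
equations hold. -/
def ConformalOn (f1 f2 f3 : Heis → ℝ) (Ω : Set Heis) : Prop :=
  ContDiffOn ℝ (⊤ : ℕ∞) f1 Ω ∧ ContDiffOn ℝ (⊤ : ℕ∞) f2 Ω ∧ ContDiffOn ℝ (⊤ : ℕ∞) f3 Ω ∧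
  ContactOn f1 f2 f3 Ω ∧ (∀ p ∈ Ω, 0 < JF f1 f2 p) ∧
  ∀ p ∈ Ω, (XD f1 p) ^ 2 + (XD f2 p) ^ 2 = (YD f1 p) ^ 2 + (YD f2 p) ^ 2 ∧
           XD f1 p * YD f1 p + XD f2 p * YD f2 p = 0

/-- The sub-Laplacian Δ_H = X² + Y². -/
def LapH {E : Type*} [NormedAddCommGroup E] [NormedSpace ℝ E] (u : Heis → E) (p : Heis) : E :=
  XD (XD u) p + YD (YD u) p

/-- The CR Schwarzian derivative S_CR(f) = (1/2)·J_F·Z²(J_F⁻¹). -/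
def SCR (f1 f2 : Heis → ℝ) (p : Heis) : ℂ :=
  (1 / 2 : ℂ) * (JF f1 f2 p : ℂ) * ZD (ZD (fun q => (((JF f1 f2 q)⁻¹ : ℝ) : ℂ))) p

/-- The classical type Schwarzian S_CL(f) = Z³F/ZF − (3/2)(Z²F/ZF)². -/
def SCL (f1 f2 : Heis → ℝ) (p : Heis) : ℂ :=
  ZD (ZD (ZD (CF f1 f2))) p / ZD (CF f1 f2) p
    - (3 / 2 : ℂ) * (ZD (ZD (CF f1 f2)) p / ZD (CF f1 f2) p) ^ 2

/-- The Preschwarzian Pf = Z(ln J_F). -/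
def PS (f1 f2 : Heis → ℝ) (p : Heis) : ℂ := ZD (Cplx (fun q => Real.log (JF f1 f2 q))) p

/-- The map (f₁,f₂,f₃) packaged as a map Heis → Heis. -/
def Fmap (f1 f2 f3 : Heis → ℝ) (p : Heis) : Heis := (f1 p, f2 p, f3 p)

/-- Smoothness on `Ω`. -/
abbrev SmoothOn {E : Type*} [NormedAddCommGroup E] [NormedSpace ℝ E] (u : Heis → E)
    (Ω : Set Heis) : Prop :=
  ContDiffOn ℝ (⊤ : ℕ∞) u Ω

/-- A local operator on complex-valued functions that restricts to a derivation of the algebra of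
smooth functions on `Ω`. -/
structure IsDerivationOn (D : (Heis → ℂ) → Heis → ℂ) (Ω : Set Heis) : Prop where
  smooth : ∀ {u}, SmoothOn u Ω → SmoothOn (D u) Ω
  congr : ∀ {u v}, Set.EqOn u v Ω → Set.EqOn (D u) (D v) Ω
  const : ∀ (c : ℂ), ∀ p ∈ Ω, D (fun _ => c) p = 0
  add : ∀ {u v}, SmoothOn u Ω → SmoothOn v Ω → ∀ p ∈ Ω, D (fun q => u q + v q) p = D u p + D v p
  mul : ∀ {u v}, SmoothOn u Ω → SmoothOn v Ω → ∀ p ∈ Ω,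
    D (fun q => u q * v q) p = D u p * v p + u p * D v p

section Operators

variable {Ω : Set Heis} {E : Type*} [NormedAddCommGroup E] [NormedSpace ℝ E]

theorem SmoothOn.differentiableAt {u : Heis → E} (hu : SmoothOn u Ω) (hΩ : IsOpen Ω) {p : Heis}
    (hp : p ∈ Ω) : DifferentiableAt ℝ u p :=
  (hu.contDiffAt (hΩ.mem_nhds hp)).differentiableAt (by simp)

theorem SmoothOn.fderiv_apply {u : Heis → E} (hu : SmoothOn u Ω) (hΩ : IsOpen Ω)
    {V : Heis → Heis} (hV : ContDiff ℝ (⊤ : ℕ∞) V) :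
    SmoothOn (fun q => fderiv ℝ u q (V q)) Ω :=
  (hu.fderiv_of_isOpen hΩ (by norm_cast)).clm_apply hV.contDiffOn

theorem contDiff_field_X : ContDiff ℝ (⊤ : ℕ∞) fun p : Heis => ((1, 0, 2 * p.2.1) : Heis) := by
  fun_prop

theorem contDiff_field_Y : ContDiff ℝ (⊤ : ℕ∞) fun p : Heis => ((0, 1, -(2 * p.1)) : Heis) := by
  fun_prop

theorem SmoothOn.XD {u : Heis → E} (hu : SmoothOn u Ω) (hΩ : IsOpen Ω) : SmoothOn (XD u) Ω :=
  hu.fderiv_apply hΩ contDiff_field_X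

theorem SmoothOn.YD {u : Heis → E} (hu : SmoothOn u Ω) (hΩ : IsOpen Ω) : SmoothOn (YD u) Ω :=
  hu.fderiv_apply hΩ contDiff_field_Y

theorem SmoothOn.ofReal {u : Heis → ℝ} (hu : SmoothOn u Ω) :
    SmoothOn (fun q => (u q : ℂ)) Ω :=
  Complex.ofRealCLM.contDiff.comp_contDiffOn hu

/-- Differentiation along a smooth vector field is a derivation. -/
theorem isDerivationOn_fderiv (hΩ : IsOpen Ω) {V : Heis → Heis}
    (hV : ContDiff ℝ (⊤ : ℕ∞) V) :
    IsDerivationOn (fun u p => fderiv ℝ u p (V p)) Ω where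
  smooth hu := hu.fderiv_apply hΩ hV
  congr h p hp := by
    simp only [(h.eventuallyEq_of_mem (hΩ.mem_nhds hp)).fderiv_eq]
  const c p _ := by simp
  add hu hv p hp := by
    simp only [fderiv_fun_add (hu.differentiableAt hΩ hp) (hv.differentiableAt hΩ hp)]
    simp
  mul hu hv p hp := by
    simp only [fderiv_fun_mul (hu.differentiableAt hΩ hp) (hv.differentiableAt hΩ hp)]
    simp
    ring

theorem isDerivationOn_XD (hΩ : IsOpen Ω) : IsDerivationOn XD Ω :=
  isDerivationOn_fderiv hΩ contDiff_field_X

theorem isDerivationOn_YD (hΩ : IsOpen Ω) : IsDerivationOn YD Ω :=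
  isDerivationOn_fderiv hΩ contDiff_field_Y

theorem isDerivationOn_TD (hΩ : IsOpen Ω) : IsDerivationOn TD Ω :=
  isDerivationOn_fderiv (V := fun _ => (0, 0, 1)) hΩ contDiff_const

namespace IsDerivationOn

variable {D D' : (Heis → ℂ) → Heis → ℂ}

theorem lin_comb (hD : IsDerivationOn D Ω) (hD' : IsDerivationOn D' Ω) (a b : ℂ) :
    IsDerivationOn (fun u p => a * D u p + b * D' u p) Ω where
  smooth hu :=
    (contDiffOn_const.mul (hD.smooth hu)).add (contDiffOn_const.mul (hD'.smooth hu))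
  congr h p hp := by simp only [hD.congr h hp, hD'.congr h hp]
  const c p hp := by simp [hD.const c p hp, hD'.const c p hp]
  add hu hv p hp := by
    simp only [hD.add hu hv p hp, hD'.add hu hv p hp]
    ring
  mul hu hv p hp := by
    simp only [hD.mul hu hv p hp, hD'.mul hu hv p hp]
    ring

theorem const_mul (hD : IsDerivationOn D Ω) (c : ℂ) {u : Heis → ℂ} (hu : SmoothOn u Ω)
    {p : Heis} (hp : p ∈ Ω) : D (fun q => c * u q) p = c * D u p := by
  rw [hD.mul (u := fun _ => c) contDiffOn_const hu p hp, hD.const c p hp]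
  ring

theorem apply_lin_comb (hD : IsDerivationOn D Ω) (a b : ℂ)
    {u v : Heis → ℂ} (hu : SmoothOn u Ω) (hv : SmoothOn v Ω) {p : Heis} (hp : p ∈ Ω) :
    D (fun q => a * u q + b * v q) p = a * D u p + b * D v p := by
  rw [hD.add (contDiffOn_const.mul hu) (contDiffOn_const.mul hv) p hp, hD.const_mul a hu hp,
    hD.const_mul b hv hp]

theorem eq_zero_of_eqOn_const (hD : IsDerivationOn D Ω) {u : Heis → ℂ} {c : ℂ}
    (hu : ∀ q ∈ Ω, u q = c) {p : Heis} (hp : p ∈ Ω) : D u p = 0 := by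
  rw [hD.congr (v := fun _ => c) hu hp, hD.const c p hp]

end IsDerivationOn

theorem ZD_eq_lin_comb :
    ZD = fun u p => (1 / 2 : ℂ) * XD u p + (-Complex.I / 2) * YD u p := by
  funext u p
  simp only [ZD]
  ring

theorem ZbD_eq_lin_comb :
    ZbD = fun u p => (1 / 2 : ℂ) * XD u p + (Complex.I / 2) * YD u p := by
  funext u p
  simp only [ZbD]
  ring

theorem isDerivationOn_ZD (hΩ : IsOpen Ω) : IsDerivationOn ZD Ω := by
  rw [ZD_eq_lin_comb]
  exact (isDerivationOn_XD hΩ).lin_comb (isDerivationOn_YD hΩ) _ _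

theorem isDerivationOn_ZbD (hΩ : IsOpen Ω) : IsDerivationOn ZbD Ω := by
  rw [ZbD_eq_lin_comb]
  exact (isDerivationOn_XD hΩ).lin_comb (isDerivationOn_YD hΩ) _ _

end Operators

section Commutators

variable {Ω : Set Heis} {u : Heis → ℂ}

/-- The commutator of differentiation along two vector fields is differentiation along their Lie
bracket. -/
theorem fderiv_fderiv_apply_sub (hΩ : IsOpen Ω) (hu : SmoothOn u Ω) {p : Heis} (hp : p ∈ Ω)
    {V W : Heis → Heis} {V' W' : Heis →L[ℝ] Heis} (hV : HasFDerivAt V V' p)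
    (hW : HasFDerivAt W W' p) :
    fderiv ℝ (fun q => fderiv ℝ u q (W q)) p (V p)
      - fderiv ℝ (fun q => fderiv ℝ u q (V q)) p (W p)
      = fderiv ℝ u p (W' (V p) - V' (W p)) := by
  have hu' : DifferentiableAt ℝ (fderiv ℝ u) p :=
    ((hu.fderiv_of_isOpen hΩ (m := (⊤ : ℕ∞)) (by norm_cast)).contDiffAt
      (hΩ.mem_nhds hp)).differentiableAt (by simp)
  have hsymm : IsSymmSndFDerivAt ℝ u p :=
    (hu.contDiffAt (hΩ.mem_nhds hp)).isSymmSndFDerivAt (by simp; norm_cast)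
  rw [(hu'.hasFDerivAt.clm_apply hV).fderiv, (hu'.hasFDerivAt.clm_apply hW).fderiv]
  simp [hsymm.eq (V p) (W p)]

theorem hasFDerivAt_field_X (p : Heis) :
    HasFDerivAt (fun q : Heis => ((1, 0, 2 * q.2.1) : Heis))
      ((0 : Heis →L[ℝ] ℝ).prod ((0 : Heis →L[ℝ] ℝ).prod ((2 : ℝ) •
        (ContinuousLinearMap.fst ℝ ℝ ℝ).comp (ContinuousLinearMap.snd ℝ ℝ (ℝ × ℝ))))) p :=
  (hasFDerivAt_const _ _).prodMk ((hasFDerivAt_const _ _).prodMk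
    (((ContinuousLinearMap.fst ℝ ℝ ℝ).comp
      (ContinuousLinearMap.snd ℝ ℝ (ℝ × ℝ))).hasFDerivAt.const_mul 2))

theorem hasFDerivAt_field_Y (p : Heis) :
    HasFDerivAt (fun q : Heis => ((0, 1, -(2 * q.1)) : Heis))
      ((0 : Heis →L[ℝ] ℝ).prod ((0 : Heis →L[ℝ] ℝ).prod (-((2 : ℝ) •
        ContinuousLinearMap.fst ℝ ℝ (ℝ × ℝ))))) p :=
  (hasFDerivAt_const _ _).prodMk ((hasFDerivAt_const _ _).prodMk
    ((ContinuousLinearMap.fst ℝ ℝ (ℝ × ℝ)).hasFDerivAt.const_mul 2).neg)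

theorem XD_YD_sub_YD_XD (hΩ : IsOpen Ω) (hu : SmoothOn u Ω) {p : Heis} (hp : p ∈ Ω) :
    XD (YD u) p - YD (XD u) p = -4 * TD u p := by
  have h := fderiv_fderiv_apply_sub hΩ hu hp (hasFDerivAt_field_X p) (hasFDerivAt_field_Y p)
  refine h.trans ?_
  have hv : ((0, 0, -4) : Heis) = (-4 : ℝ) • ((0, 0, 1) : Heis) := by
    ext <;> norm_num
  have hT : fderiv ℝ u p (0, 0, -4) = -4 * TD u p := by
    rw [hv, map_smul, TD, Complex.real_smul]
    push_cast
    rfl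
  rw [← hT]
  congr 1
  ext <;> norm_num

theorem XD_TD_comm (hΩ : IsOpen Ω) (hu : SmoothOn u Ω) {p : Heis} (hp : p ∈ Ω) :
    XD (TD u) p = TD (XD u) p := by
  have h := fderiv_fderiv_apply_sub hΩ hu hp (hasFDerivAt_field_X p)
    (hasFDerivAt_const ((0, 0, 1) : Heis) p)
  refine sub_eq_zero.mp (h.trans ?_)
  convert map_zero (fderiv ℝ u p)
  ext <;> simp

theorem YD_TD_comm (hΩ : IsOpen Ω) (hu : SmoothOn u Ω) {p : Heis} (hp : p ∈ Ω) :
    YD (TD u) p = TD (YD u) p := by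
  have h := fderiv_fderiv_apply_sub hΩ hu hp (hasFDerivAt_field_Y p)
    (hasFDerivAt_const ((0, 0, 1) : Heis) p)
  refine sub_eq_zero.mp (h.trans ?_)
  convert map_zero (fderiv ℝ u p)
  ext <;> simp

theorem ZD_TD_comm (hΩ : IsOpen Ω) (hu : SmoothOn u Ω) {p : Heis} (hp : p ∈ Ω) :
    ZD (TD u) p = TD (ZD u) p := by
  simp only [ZD_eq_lin_comb]
  rw [(isDerivationOn_TD hΩ).apply_lin_comb _ _ (hu.XD hΩ) (hu.YD hΩ) hp, XD_TD_comm hΩ hu hp,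
    YD_TD_comm hΩ hu hp]

theorem ZD_ZbD_sub_ZbD_ZD (hΩ : IsOpen Ω) (hu : SmoothOn u Ω) {p : Heis} (hp : p ∈ Ω) :
    ZD (ZbD u) p - ZbD (ZD u) p = -2 * Complex.I * TD u p := by
  have hX := isDerivationOn_XD hΩ
  have hY := isDerivationOn_YD hΩ
  simp only [ZD_eq_lin_comb, ZbD_eq_lin_comb]
  rw [hX.apply_lin_comb _ _ (hu.XD hΩ) (hu.YD hΩ) hp,
    hY.apply_lin_comb _ _ (hu.XD hΩ) (hu.YD hΩ) hp,
    hX.apply_lin_comb _ _ (hu.XD hΩ) (hu.YD hΩ) hp,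
    hY.apply_lin_comb _ _ (hu.XD hΩ) (hu.YD hΩ) hp]
  linear_combination (Complex.I / 2) * XD_YD_sub_YD_XD hΩ hu hp

end Commutators

section CRIdentities

variable {Ω : Set Heis} {G Gb c : Heis → ℂ}

/-- Consequence of the commutation relations for a contact map `(G, c)` with `Z̄G = 0`, where `Gb`
plays the role of the conjugate of `G`. -/
theorem ZD_ZD_mul_ZbD (hΩ : IsOpen Ω) (hG : SmoothOn G Ω) (hGb : SmoothOn Gb Ω)
    (hc : SmoothOn c Ω) (hZbG : ∀ q ∈ Ω, ZbD G q = 0) (hZGb : ∀ q ∈ Ω, ZD Gb q = 0)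
    (hZc : ∀ q ∈ Ω, ZD c q = Complex.I * (Gb q * ZD G q))
    (hZbc : ∀ q ∈ Ω, ZbD c q = -Complex.I * (G q * ZbD Gb q)) {p : Heis} (hp : p ∈ Ω) :
    ZD (ZD G) p * ZbD Gb p = -2 * (ZD G p * ZD (ZbD Gb) p) := by
  have hZ := isDerivationOn_ZD hΩ
  have hZb := isDerivationOn_ZbD hΩ
  have hT := isDerivationOn_TD hΩ
  have ha := hZ.smooth hG
  have hb := hZb.smooth hGb
  have hTG := hT.smooth hG
  have hTGb := hT.smooth hGb
  have comm_Gb : ∀ q ∈ Ω, ZD (ZbD Gb) q = -2 * Complex.I * TD Gb q := fun q hq => by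
    rw [← ZD_ZbD_sub_ZbD_ZD hΩ hGb hq, hZb.eq_zero_of_eqOn_const hZGb hq, sub_zero]
  have comm_G : ∀ q ∈ Ω, ZbD (ZD G) q = 2 * Complex.I * TD G q := fun q hq => by
    have h := ZD_ZbD_sub_ZbD_ZD hΩ hG hq
    rw [hZ.eq_zero_of_eqOn_const hZbG hq] at h
    linear_combination -h
  have hTc : Set.EqOn (TD c) (fun q => ZD G q * ZbD Gb q
      + (Complex.I * (Gb q * TD G q) + -Complex.I * (G q * TD Gb q))) Ω := fun q hq => by
    have h := ZD_ZbD_sub_ZbD_ZD hΩ hc hq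
    rw [hZ.congr hZbc hq, hZb.congr hZc hq, hZ.const_mul _ (hG.mul hb) hq,
      hZb.const_mul _ (hGb.mul ha) hq, hZ.mul hG hb q hq, hZb.mul hGb ha q hq, comm_Gb q hq,
      comm_G q hq] at h
    have hI := Complex.I_mul_I
    linear_combination (-Complex.I / 2) * h
      - (ZD G q * ZbD Gb q + Complex.I * Gb q * TD G q - Complex.I * G q * TD Gb q - TD c q) * hI
  have h := ZD_TD_comm hΩ hc hp
  rw [hZ.congr hTc hp, hT.congr hZc hp,
    hZ.add (ha.mul hb) ((contDiffOn_const.mul (hGb.mul hTG)).add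
      (contDiffOn_const.mul (hG.mul hTGb))) p hp,
    hZ.apply_lin_comb _ _ (hGb.mul hTG) (hG.mul hTGb) hp, hT.const_mul _ (hGb.mul ha) hp,
    hZ.mul ha hb p hp, hZ.mul hGb hTG p hp, hZ.mul hG hTGb p hp, hT.mul hGb ha p hp,
    ZD_TD_comm hΩ hG hp, ZD_TD_comm hΩ hGb hp, hT.eq_zero_of_eqOn_const hZGb hp,
    hZGb p hp] at h
  linear_combination h + ZD G p * comm_Gb p hp

theorem ZD_ZD_ZbD_eq_zero (hΩ : IsOpen Ω) (hGb : SmoothOn Gb Ω)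
    (hZGb : ∀ q ∈ Ω, ZD Gb q = 0) {p : Heis} (hp : p ∈ Ω) : ZD (ZD (ZbD Gb)) p = 0 := by
  have hZ := isDerivationOn_ZD hΩ
  have hT := isDerivationOn_TD hΩ
  have comm_Gb : ∀ q ∈ Ω, ZD (ZbD Gb) q = -2 * Complex.I * TD Gb q := fun q hq => by
    rw [← ZD_ZbD_sub_ZbD_ZD hΩ hGb hq,
      (isDerivationOn_ZbD hΩ).eq_zero_of_eqOn_const hZGb hq, sub_zero]
  rw [hZ.congr comm_Gb hp, hZ.const_mul _ (hT.smooth hGb) hp, ZD_TD_comm hΩ hGb hp,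
    hT.eq_zero_of_eqOn_const hZGb hp, mul_zero]

end CRIdentities

/-- If `D` is a derivation, `(Da) b = -2 a (Db)`, `D²b = 0`, `v = 1 / (ab)`, and
`Dh = k a`, `Dk = l a`, then `D²(h v) = l a² v`. -/
theorem IsDerivationOn.sq_apply_mul {D : (Heis → ℂ) → Heis → ℂ} {Ω : Set Heis}
    (hD : IsDerivationOn D Ω) {a b v h k l : Heis → ℂ} (ha : SmoothOn a Ω) (hb : SmoothOn b Ω)
    (hv : SmoothOn v Ω) (hh : SmoothOn h Ω) (hk : SmoothOn k Ω)
    (hab : ∀ q ∈ Ω, D a q * b q = -2 * (a q * D b q)) (hb2 : ∀ q ∈ Ω, D (D b) q = 0)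
    (hvab : ∀ q ∈ Ω, v q * (a q * b q) = 1) (hDh : ∀ q ∈ Ω, D h q = k q * a q)
    (hDk : ∀ q ∈ Ω, D k q = l q * a q) {p : Heis} (hp : p ∈ Ω) :
    D (D (fun q => h q * v q)) p = l p * a p ^ 2 * v p := by
  have hDb := hD.smooth hb
  have hv2 := hv.mul hv
  have hDv : ∀ q ∈ Ω, D v q = v q * v q * (a q * D b q) := fun q hq => by
    have e := hD.eq_zero_of_eqOn_const hvab hq
    rw [hD.mul hv (ha.mul hb) q hq, hD.mul ha hb q hq] at e
    linear_combination v q * e - v q * v q * hab q hq - D v q * hvab q hq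
  have hDhv : Set.EqOn (D fun q => h q * v q)
      (fun q => k q * (a q * v q) + h q * (v q * v q * (a q * D b q))) Ω := fun q hq => by
    simp only
    rw [hD.mul hh hv q hq, hDh q hq, hDv q hq]
    ring
  rw [hD.congr hDhv hp, hD.add (hk.mul (ha.mul hv)) (hh.mul (hv2.mul (ha.mul hDb))) p hp,
    hD.mul hk (ha.mul hv) p hp, hD.mul ha hv p hp, hD.mul hh (hv2.mul (ha.mul hDb)) p hp,
    hD.mul hv2 (ha.mul hDb) p hp, hD.mul hv hv p hp, hD.mul ha hDb p hp, hDh p hp, hDk p hp,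
    hDv p hp, hb2 p hp]
  have e := hab p hp
  have e1 := hvab p hp
  have hDa : D a p = -2 * (v p * a p * a p * D b p) := by
    linear_combination v p * a p * e - D a p * e1
  rw [hDa]
  ring

section Chain

variable {Ω Ω' : Set Heis} {g1 g2 g3 : Heis → ℝ} {E : Type*} [NormedAddCommGroup E]
  [NormedSpace ℝ E] {u : Heis → E}

theorem fderiv_comp_Fmap {p : Heis} (h1 : DifferentiableAt ℝ g1 p)
    (h2 : DifferentiableAt ℝ g2 p) (h3 : DifferentiableAt ℝ g3 p)
    (hu : DifferentiableAt ℝ u (Fmap g1 g2 g3 p)) (w : Heis)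
    (hw : fderiv ℝ g3 p w - 2 * g2 p * fderiv ℝ g1 p w + 2 * g1 p * fderiv ℝ g2 p w = 0) :
    fderiv ℝ (fun q => u (Fmap g1 g2 g3 q)) p w
      = fderiv ℝ g1 p w • XD u (Fmap g1 g2 g3 p) + fderiv ℝ g2 p w • YD u (Fmap g1 g2 g3 p) := by
  have hg : HasFDerivAt (Fmap g1 g2 g3)
      ((fderiv ℝ g1 p).prod ((fderiv ℝ g2 p).prod (fderiv ℝ g3 p))) p :=
    h1.hasFDerivAt.prodMk (h2.hasFDerivAt.prodMk h3.hasFDerivAt)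
  have hcomp : HasFDerivAt (fun q => u (Fmap g1 g2 g3 q)) _ p := hu.hasFDerivAt.comp p hg
  rw [hcomp.fderiv, XD, YD, ← map_smul, ← map_smul, ← map_add]
  simp only [ContinuousLinearMap.comp_apply, ContinuousLinearMap.prod_apply]
  congr 1
  ext
  · simp
  · simp
  · simp [Fmap]
    linear_combination hw

theorem XD_comp_Fmap (hΩ : IsOpen Ω) (hΩ' : IsOpen Ω') (hg1 : SmoothOn g1 Ω)
    (hg2 : SmoothOn g2 Ω) (hg3 : SmoothOn g3 Ω) (hg : ContactOn g1 g2 g3 Ω)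
    (hmaps : ∀ p ∈ Ω, Fmap g1 g2 g3 p ∈ Ω') (hu : SmoothOn u Ω') {p : Heis} (hp : p ∈ Ω) :
    XD (fun q => u (Fmap g1 g2 g3 q)) p
      = XD g1 p • XD u (Fmap g1 g2 g3 p) + XD g2 p • YD u (Fmap g1 g2 g3 p) :=
  fderiv_comp_Fmap (hg1.differentiableAt hΩ hp) (hg2.differentiableAt hΩ hp)
    (hg3.differentiableAt hΩ hp) (hu.differentiableAt hΩ' (hmaps p hp)) _ (hg p hp).1

theorem YD_comp_Fmap (hΩ : IsOpen Ω) (hΩ' : IsOpen Ω') (hg1 : SmoothOn g1 Ω)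
    (hg2 : SmoothOn g2 Ω) (hg3 : SmoothOn g3 Ω) (hg : ContactOn g1 g2 g3 Ω)
    (hmaps : ∀ p ∈ Ω, Fmap g1 g2 g3 p ∈ Ω') (hu : SmoothOn u Ω') {p : Heis} (hp : p ∈ Ω) :
    YD (fun q => u (Fmap g1 g2 g3 q)) p
      = YD g1 p • XD u (Fmap g1 g2 g3 p) + YD g2 p • YD u (Fmap g1 g2 g3 p) :=
  fderiv_comp_Fmap (hg1.differentiableAt hΩ hp) (hg2.differentiableAt hΩ hp)
    (hg3.differentiableAt hΩ hp) (hu.differentiableAt hΩ' (hmaps p hp)) _ (hg p hp).2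

theorem SmoothOn.comp_Fmap (hu : SmoothOn u Ω') (hg1 : SmoothOn g1 Ω)
    (hg2 : SmoothOn g2 Ω) (hg3 : SmoothOn g3 Ω) (hmaps : ∀ p ∈ Ω, Fmap g1 g2 g3 p ∈ Ω') :
    SmoothOn (fun q => u (Fmap g1 g2 g3 q)) Ω :=
  ContDiffOn.comp hu (hg1.prodMk (hg2.prodMk hg3)) hmaps

end Chain

section Complexification

theorem XD_ofReal {u : Heis → ℝ} {p : Heis} (hu : DifferentiableAt ℝ u p) :
    XD (fun q => (u q : ℂ)) p = ((XD u p : ℝ) : ℂ) := by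
  have h : HasFDerivAt (fun q => (u q : ℂ)) _ p :=
    Complex.ofRealCLM.hasFDerivAt.comp p hu.hasFDerivAt
  simp only [XD, h.fderiv]
  simp

theorem YD_ofReal {u : Heis → ℝ} {p : Heis} (hu : DifferentiableAt ℝ u p) :
    YD (fun q => (u q : ℂ)) p = ((YD u p : ℝ) : ℂ) := by
  have h : HasFDerivAt (fun q => (u q : ℂ)) _ p :=
    Complex.ofRealCLM.hasFDerivAt.comp p hu.hasFDerivAt
  simp only [YD, h.fderiv]
  simp

variable {Ω : Set Heis} {g1 g2 : Heis → ℝ}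

theorem IsDerivationOn.apply_ofReal_lin_comb {D : (Heis → ℂ) → Heis → ℂ}
    (hD : IsDerivationOn D Ω) (hg1 : SmoothOn g1 Ω) (hg2 : SmoothOn g2 Ω) (c : ℂ) {p : Heis}
    (hp : p ∈ Ω) :
    D (fun q => (g1 q : ℂ) + g2 q * c) p
      = D (fun q => (g1 q : ℂ)) p + c * D (fun q => (g2 q : ℂ)) p := by
  rw [hD.add hg1.ofReal (hg2.ofReal.mul contDiffOn_const) p hp,
    hD.mul hg2.ofReal contDiffOn_const p hp, hD.const c p hp]
  ring

theorem ZD_ofReal (hΩ : IsOpen Ω) (hg1 : SmoothOn g1 Ω) {p : Heis} (hp : p ∈ Ω) :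
    ZD (fun q => (g1 q : ℂ)) p = (((XD g1 p : ℝ) : ℂ) - Complex.I * (YD g1 p : ℝ)) / 2 := by
  rw [ZD, XD_ofReal (hg1.differentiableAt hΩ hp), YD_ofReal (hg1.differentiableAt hΩ hp)]

theorem ZbD_ofReal (hΩ : IsOpen Ω) (hg1 : SmoothOn g1 Ω) {p : Heis} (hp : p ∈ Ω) :
    ZbD (fun q => (g1 q : ℂ)) p = (((XD g1 p : ℝ) : ℂ) + Complex.I * (YD g1 p : ℝ)) / 2 := by
  rw [ZbD, XD_ofReal (hg1.differentiableAt hΩ hp), YD_ofReal (hg1.differentiableAt hΩ hp)]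

end Complexification

/-- A conformal map satisfies the Cauchy–Riemann equations along the horizontal fields. -/
theorem ConformalOn.cauchyRiemann {g1 g2 g3 : Heis → ℝ} {Ω : Set Heis}
    (hg : ConformalOn g1 g2 g3 Ω) {p : Heis} (hp : p ∈ Ω) :
    YD g2 p = XD g1 p ∧ YD g1 p = -XD g2 p := by
  obtain ⟨-, -, -, -, hJ, hconf⟩ := hg
  have hJp := hJ p hp
  obtain ⟨h1, h2⟩ := hconf p hp
  rw [JF] at hJp
  generalize XD g1 p = a at *
  generalize XD g2 p = b at *
  generalize YD g1 p = c at *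
  generalize YD g2 p = d at *
  have hJsq : (a * d - c * b) ^ 2 = (a ^ 2 + b ^ 2) ^ 2 := by
    linear_combination -(a ^ 2 + b ^ 2) * h1 - (a * c + b * d) * h2
  have hJeq : a * d - c * b = a ^ 2 + b ^ 2 :=
    (pow_left_inj₀ hJp.le (by positivity) two_ne_zero).mp hJsq
  have hsum : (d - a) ^ 2 + (c + b) ^ 2 = 0 := by linear_combination -h1 - 2 * hJeq
  have hd : (d - a) ^ 2 = 0 := by nlinarith [sq_nonneg (d - a), sq_nonneg (c + b)]
  have hc : (c + b) ^ 2 = 0 := by nlinarith [sq_nonneg (d - a), sq_nonneg (c + b)]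
  exact ⟨sub_eq_zero.mp (pow_eq_zero_iff two_ne_zero |>.mp hd),
    eq_neg_of_add_eq_zero_left (pow_eq_zero_iff two_ne_zero |>.mp hc)⟩

/-- right cocycle condition for the CR Schwarzian:
S_CR(f ∘ g) = (S_CR(f) ∘ g)·(ZG)² on Ω, where f is a smooth positively oriented contact
map on Ω' and g : Ω → Ω' is a smooth conformal map. -/
theorem stmt_5 (Ω Ω' : Set Heis) (hΩ : IsOpen Ω) (hΩ' : IsOpen Ω')
    (f1 f2 f3 : Heis → ℝ)
    (hf1 : ContDiffOn ℝ (⊤ : ℕ∞) f1 Ω') (hf2 : ContDiffOn ℝ (⊤ : ℕ∞) f2 Ω')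
    (hf3 : ContDiffOn ℝ (⊤ : ℕ∞) f3 Ω')
    (hcont : ContactOn f1 f2 f3 Ω') (hJ : ∀ p ∈ Ω', 0 < JF f1 f2 p)
    (g1 g2 g3 : Heis → ℝ) (hg : ConformalOn g1 g2 g3 Ω)
    (hmaps : ∀ p ∈ Ω, Fmap g1 g2 g3 p ∈ Ω') :
    ∀ p ∈ Ω,
      SCR (fun q => f1 (Fmap g1 g2 g3 q)) (fun q => f2 (Fmap g1 g2 g3 q)) p
        = SCR f1 f2 (Fmap g1 g2 g3 p) * (ZD (CF g1 g2) p) ^ 2 := by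
  intro p hp
  have hZ := isDerivationOn_ZD hΩ
  have hZb := isDerivationOn_ZbD hΩ
  have hZ' := isDerivationOn_ZD hΩ'
  have hCR : ∀ q ∈ Ω, _ := fun q hq => hg.cauchyRiemann hq
  obtain ⟨hg1, hg2, hg3, hgc, hJg, -⟩ := hg
  replace hg1 : SmoothOn g1 Ω := hg1
  replace hg2 : SmoothOn g2 Ω := hg2
  replace hg3 : SmoothOn g3 Ω := hg3
  set Gb : Heis → ℂ := fun q => (g1 q : ℂ) + g2 q * -Complex.I with hGb_def
  have hG : SmoothOn (CF g1 g2) Ω := hg1.ofReal.add (hg2.ofReal.mul contDiffOn_const)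
  have hGb : SmoothOn Gb Ω := hg1.ofReal.add (hg2.ofReal.mul contDiffOn_const)
  have hI := Complex.I_mul_I
  have hZG : ∀ q ∈ Ω, ZD (CF g1 g2) q = XD g1 q + Complex.I * XD g2 q := fun q hq => by
    rw [show CF g1 g2 = fun q => (g1 q : ℂ) + g2 q * Complex.I from rfl,
      hZ.apply_ofReal_lin_comb hg1 hg2 _ hq, ZD_ofReal hΩ hg1 hq, ZD_ofReal hΩ hg2 hq,
      (hCR q hq).1, (hCR q hq).2]
    push_cast
    linear_combination (-((XD g1 q : ℝ) : ℂ) / 2) * hI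
  have hZbG : ∀ q ∈ Ω, ZbD (CF g1 g2) q = 0 := fun q hq => by
    rw [show CF g1 g2 = fun q => (g1 q : ℂ) + g2 q * Complex.I from rfl,
      hZb.apply_ofReal_lin_comb hg1 hg2 _ hq, ZbD_ofReal hΩ hg1 hq, ZbD_ofReal hΩ hg2 hq,
      (hCR q hq).1, (hCR q hq).2]
    push_cast
    linear_combination (((XD g1 q : ℝ) : ℂ) / 2) * hI
  have hZGb : ∀ q ∈ Ω, ZD Gb q = 0 := fun q hq => by
    rw [hZ.apply_ofReal_lin_comb hg1 hg2 _ hq, ZD_ofReal hΩ hg1 hq, ZD_ofReal hΩ hg2 hq,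
      (hCR q hq).1, (hCR q hq).2]
    push_cast
    linear_combination (((XD g1 q : ℝ) : ℂ) / 2) * hI
  have hZbGb : ∀ q ∈ Ω, ZbD Gb q = XD g1 q - Complex.I * XD g2 q := fun q hq => by
    rw [hZb.apply_ofReal_lin_comb hg1 hg2 _ hq, ZbD_ofReal hΩ hg1 hq, ZbD_ofReal hΩ hg2 hq,
      (hCR q hq).1, (hCR q hq).2]
    push_cast
    linear_combination (-((XD g1 q : ℝ) : ℂ) / 2) * hI
  have hcontC : ∀ q ∈ Ω, ((XD g3 q : ℝ) : ℂ) = 2 * g2 q * XD g1 q - 2 * g1 q * XD g2 q ∧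
      ((YD g3 q : ℝ) : ℂ) = 2 * g2 q * YD g1 q - 2 * g1 q * YD g2 q := fun q hq => by
    obtain ⟨h1, h2⟩ := hgc q hq
    constructor
    · exact_mod_cast (by linear_combination h1 :
        XD g3 q = 2 * g2 q * XD g1 q - 2 * g1 q * XD g2 q)
    · exact_mod_cast (by linear_combination h2 :
        YD g3 q = 2 * g2 q * YD g1 q - 2 * g1 q * YD g2 q)
  have hZc : ∀ q ∈ Ω, ZD (fun q => (g3 q : ℂ)) q
      = Complex.I * (Gb q * ZD (CF g1 g2) q) := fun q hq => by
    rw [ZD_ofReal hΩ hg3 hq, hZG q hq, (hcontC q hq).1, (hcontC q hq).2, (hCR q hq).1,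
      (hCR q hq).2, hGb_def]
    push_cast
    ring_nf
    simp only [Complex.I_sq, Complex.I_pow_three]
    ring
  have hZbc : ∀ q ∈ Ω, ZbD (fun q => (g3 q : ℂ)) q
      = -Complex.I * (CF g1 g2 q * ZbD Gb q) := fun q hq => by
    rw [ZbD_ofReal hΩ hg3 hq, hZbGb q hq, (hcontC q hq).1, (hcontC q hq).2, (hCR q hq).1,
      (hCR q hq).2, CF]
    push_cast
    ring_nf
    simp only [Complex.I_sq, Complex.I_pow_three]
    ring
  have hJG : ∀ q ∈ Ω, (JF g1 g2 q : ℂ) = ZD (CF g1 g2) q * ZbD Gb q := fun q hq => by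
    rw [hZG q hq, hZbGb q hq, JF, (hCR q hq).1, (hCR q hq).2]
    push_cast
    linear_combination ((XD g2 q : ℝ) : ℂ) ^ 2 * hI
  have hJ_smooth : ∀ {h1 h2 : Heis → ℝ} {U : Set Heis}, IsOpen U → SmoothOn h1 U →
      SmoothOn h2 U → (∀ q ∈ U, 0 < JF h1 h2 q) →
      SmoothOn (fun q => (((JF h1 h2 q)⁻¹ : ℝ) : ℂ)) U := fun hU h1 h2 hpos =>
    SmoothOn.ofReal ((((h1.XD hU).mul (h2.YD hU)).sub ((h1.YD hU).mul (h2.XD hU))).inv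
      fun q hq => (hpos q hq).ne')
  have hJcomp : ∀ q ∈ Ω, JF (fun q => f1 (Fmap g1 g2 g3 q)) (fun q => f2 (Fmap g1 g2 g3 q)) q
      = JF f1 f2 (Fmap g1 g2 g3 q) * JF g1 g2 q := fun q hq => by
    simp only [JF, XD_comp_Fmap hΩ hΩ' hg1 hg2 hg3 hgc hmaps hf1 hq,
      YD_comp_Fmap hΩ hΩ' hg1 hg2 hg3 hgc hmaps hf1 hq,
      XD_comp_Fmap hΩ hΩ' hg1 hg2 hg3 hgc hmaps hf2 hq,
      YD_comp_Fmap hΩ hΩ' hg1 hg2 hg3 hgc hmaps hf2 hq, smul_eq_mul]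
    ring
  have hZcomp : ∀ {u : Heis → ℂ}, SmoothOn u Ω' → ∀ q ∈ Ω,
      ZD (fun q => u (Fmap g1 g2 g3 q)) q
        = ZD u (Fmap g1 g2 g3 q) * ZD (CF g1 g2) q := fun {u} hu q hq => by
    rw [hZG q hq, ZD, ZD, XD_comp_Fmap hΩ hΩ' hg1 hg2 hg3 hgc hmaps hu hq,
      YD_comp_Fmap hΩ hΩ' hg1 hg2 hg3 hgc hmaps hu hq, (hCR q hq).1, (hCR q hq).2]
    simp only [Complex.real_smul]
    push_cast
    linear_combination (XD g2 q * YD u (Fmap g1 g2 g3 q) / 2 : ℂ) * hI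
  have hw := hJ_smooth hΩ' hf1 hf2 hJ
  have hv := hJ_smooth hΩ hg1 hg2 hJg
  have hZw := hZ'.smooth hw
  have hprod : Set.EqOn
      (fun q => (((JF (fun q => f1 (Fmap g1 g2 g3 q))
        (fun q => f2 (Fmap g1 g2 g3 q)) q)⁻¹ : ℝ) : ℂ))
      (fun q => (((JF f1 f2 (Fmap g1 g2 g3 q))⁻¹ : ℝ) : ℂ) * (((JF g1 g2 q)⁻¹ : ℝ) : ℂ)) Ω :=
    fun q hq => by
      simp only [hJcomp q hq]
      push_cast
      rw [mul_inv]
  have hvab : ∀ q ∈ Ω, (((JF g1 g2 q)⁻¹ : ℝ) : ℂ) * (ZD (CF g1 g2) q * ZbD Gb q) = 1 :=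
    fun q hq => by
      rw [← hJG q hq, ← Complex.ofReal_mul, inv_mul_cancel₀ (hJg q hq).ne', Complex.ofReal_one]
  have key := hZ.sq_apply_mul (hZ.smooth hG) (hZb.smooth hGb) hv
    (hw.comp_Fmap hg1 hg2 hg3 hmaps) (hZw.comp_Fmap hg1 hg2 hg3 hmaps)
    (fun q hq => ZD_ZD_mul_ZbD hΩ hG hGb hg3.ofReal hZbG hZGb hZc hZbc hq)
    (fun q hq => ZD_ZD_ZbD_eq_zero hΩ hGb hZGb hq) hvab (hZcomp hw) (hZcomp hZw) hp
  rw [SCR, SCR, hZ.congr (hZ.congr hprod) hp, key, hJcomp p hp]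
  have e := hvab p hp
  rw [← hJG p hp] at e
  push_cast at e ⊢
  linear_combination (1 / 2 : ℂ) * JF f1 f2 (Fmap g1 g2 g3 p)
    * ZD (ZD fun q => ((JF f1 f2 q : ℂ)⁻¹)) (Fmap g1 g2 g3 p) * ZD (CF g1 g2) p ^ 2 * e
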